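/- Let A be a finite abelian group, m ≥ 1, and let ρ, ρ' : A →* Matrix.unitaryGroup (Fin m) ℂ be group homomorphisms. Then there exists v ∈ Matrix.unitaryGroup (Fin m) ℂ with v * ρ a * v⁻¹ = ρ' a for every a ∈ A if and only if the traces agree pointwise, i.e. Matrix.trace (ρ a) = Matrix.trace (ρ' a) for every a ∈ A. In other words, conjugacy classes of homomorphisms from a finite abelian group to the unitary group are determined by their characters. -/

import Mathlib

/-!
A commuting family of normal operators on a finite-dimensional complex inner product space has an
orthonormal basis of joint eigenvectors. Along a representation of a commutative monoid, the
eigenvalues at each basis vector form a character of the monoid, and the trace is the sum of these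
characters. Characters are linearly independent, so the trace recovers each of them with its
multiplicity. A bijection between the two eigenbases that matches the characters then extends to
the required unitary.
-/

open Module Module.End
open scoped ComplexConjugate Function InnerProductSpace

theorem isStarNormal_sub_smul_one {R A : Type*} [CommRing R] [StarRing R] [Ring A] [StarRing A]
    [Algebra R A] [StarModule R A] {a : A} (ha : IsStarNormal a) (r : R) :
    IsStarNormal (a - r • (1 : A)) := by
  refine Commute.isStarNormal_sub ?_
  rw [star_smul, star_one]
  exact (Commute.one_right a).smul_right (star r)

section NormalOperators

variable {𝕜 E ι : Type*} [RCLike 𝕜] [NormedAddCommGroup E] [InnerProductSpace 𝕜 E]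
  [CompleteSpace E] {T : E →L[𝕜] E} {μ ν : 𝕜} {x y : E}

theorem adjoint_apply_eq_conj_smul_of_isStarNormal (hT : IsStarNormal T) (hx : T x = μ • x) :
    T.adjoint x = conj μ • x := by
  have hnormal := isStarNormal_sub_smul_one hT μ
  have hzero : (T - μ • 1).adjoint x = 0 :=
    (ContinuousLinearMap.IsStarNormal.adjoint_apply_eq_zero_iff hnormal x).mpr (by simp [hx])
  rw [← ContinuousLinearMap.star_eq_adjoint, star_sub, star_smul, star_one] at hzero
  exact sub_eq_zero.mp hzero

theorem inner_eq_zero_of_isStarNormal_of_ne (hT : IsStarNormal T) (hμν : μ ≠ ν)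
    (hx : T x = μ • x) (hy : T y = ν • y) : ⟪x, y⟫_𝕜 = 0 := by
  have h : μ * ⟪x, y⟫_𝕜 = ν * ⟪x, y⟫_𝕜 := calc
    μ * ⟪x, y⟫_𝕜 = ⟪T.adjoint x, y⟫_𝕜 := by
      rw [adjoint_apply_eq_conj_smul_of_isStarNormal hT hx, inner_smul_left, RCLike.conj_conj]
    _ = ν * ⟪x, y⟫_𝕜 := by rw [T.adjoint_inner_left, hy, inner_smul_right]
  by_contra hne
  exact hμν (mul_right_cancel₀ hne h)

theorem orthogonalFamily_iInf_eigenspace_of_isStarNormal {T : ι → E →L[𝕜] E}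
    (hT : ∀ i, IsStarNormal (T i)) :
    OrthogonalFamily 𝕜 (fun χ : ι → 𝕜 ↦ (⨅ i, eigenspace (T i : End 𝕜 E) (χ i) : Submodule 𝕜 E))
      fun χ ↦ (⨅ i, eigenspace (T i : End 𝕜 E) (χ i)).subtypeₗᵢ :=
  OrthogonalFamily.of_pairwise fun χ ψ hne x hx y hy ↦ by
    obtain ⟨i, hi⟩ := Function.ne_iff.mp hne
    rw [Submodule.mem_iInf] at hx hy
    exact inner_eq_zero_of_isStarNormal_of_ne (hT i) hi.symm (mem_eigenspace_iff.mp (hy i))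
      (mem_eigenspace_iff.mp (hx i))

theorem ker_sq_eq_ker_of_isStarNormal (hT : IsStarNormal T) :
    LinearMap.ker ((T : End 𝕜 E) ^ 2) = LinearMap.ker (T : End 𝕜 E) := by
  ext x
  suffices T (T x) = 0 ↔ T x = 0 by simpa [pow_two]
  refine ⟨fun h ↦ ?_, fun h ↦ by rw [h, map_zero]⟩
  have hadj : T.adjoint (T x) = 0 :=
    (ContinuousLinearMap.IsStarNormal.adjoint_apply_eq_zero_iff hT (T x)).mpr h
  rw [← inner_self_eq_zero (𝕜 := 𝕜), ← T.adjoint_inner_left, hadj, inner_zero_left]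

theorem maxGenEigenspace_eq_eigenspace_of_isStarNormal (hT : IsStarNormal T) (μ : 𝕜) :
    maxGenEigenspace (T : End 𝕜 E) μ = eigenspace (T : End 𝕜 E) μ := by
  refine le_antisymm (fun x hx ↦ ?_) eigenspace_le_maxGenEigenspace
  obtain ⟨k, hk⟩ := (mem_maxGenEigenspace _ _ _).mp hx
  set S : End 𝕜 E := T - μ • 1
  have hker : LinearMap.ker (S ^ 1) = LinearMap.ker (S ^ 2) := by
    rw [pow_one]
    exact (ker_sq_eq_ker_of_isStarNormal (isStarNormal_sub_smul_one hT μ)).symm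
  have hx : x ∈ LinearMap.ker (S ^ (1 + k)) := by
    rw [LinearMap.mem_ker, pow_add, End.mul_apply, hk, map_zero]
  rw [← ker_pow_constant hker k, pow_one] at hx
  rwa [eigenspace_def]

end NormalOperators

section JointEigenbasis

theorem exists_orthonormalBasis_mem_of_orthogonalFamily {𝕜 E ι : Type*} [RCLike 𝕜]
    [NormedAddCommGroup E] [InnerProductSpace 𝕜 E] [FiniteDimensional 𝕜 E]
    {V : ι → Submodule 𝕜 E} (hV : OrthogonalFamily 𝕜 (fun i ↦ V i) fun i ↦ (V i).subtypeₗᵢ)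
    (hsup : ⨆ i, V i = ⊤) :
    ∃ (b : OrthonormalBasis (Fin (finrank 𝕜 E)) 𝕜 E) (f : Fin (finrank 𝕜 E) → ι),
      ∀ k, b k ∈ V (f k) := by
  classical
  have : Fintype {i // V i ≠ ⊥} :=
    (WellFoundedGT.finite_ne_bot_of_iSupIndep hV.independent).fintype
  have hint : DirectSum.IsInternal fun i : {i // V i ≠ ⊥} ↦ V i :=
    DirectSum.isInternal_ne_bot_iff.mpr <|
      (DirectSum.isInternal_submodule_iff_iSupIndep_and_iSup_eq_top V).mpr ⟨hV.independent, hsup⟩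
  have hV' := hV.comp (Subtype.val_injective (p := fun i ↦ V i ≠ ⊥))
  exact ⟨hint.subordinateOrthonormalBasis rfl hV',
    fun k ↦ (hint.subordinateOrthonormalBasisIndex rfl k hV').val,
    fun k ↦ hint.subordinateOrthonormalBasis_subordinate rfl k hV'⟩

variable {ι E : Type*} [NormedAddCommGroup E] [InnerProductSpace ℂ E] [FiniteDimensional ℂ E]
  {T : ι → E →L[ℂ] E}

theorem iSup_iInf_eigenspace_eq_top_of_isStarNormal (hT : ∀ i, IsStarNormal (T i))
    (hcomm : Pairwise (Commute on T)) :
    ⨆ χ : ι → ℂ, ⨅ i, eigenspace (T i : End ℂ E) (χ i) = ⊤ := by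
  simp only [← maxGenEigenspace_eq_eigenspace_of_isStarNormal (hT _)]
  exact iSup_iInf_maxGenEigenspace_eq_top_of_iSup_maxGenEigenspace_eq_top_of_commute _
    (fun i j hij ↦ congr(ContinuousLinearMap.toLinearMap $(hcomm hij)))
    fun i ↦ iSup_maxGenEigenspace_eq_top _

theorem exists_orthonormalBasis_apply_eq_smul_of_isStarNormal (hT : ∀ i, IsStarNormal (T i))
    (hcomm : Pairwise (Commute on T)) :
    ∃ (b : OrthonormalBasis (Fin (finrank ℂ E)) ℂ E) (χ : Fin (finrank ℂ E) → ι → ℂ),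
      ∀ k i, T i (b k) = χ k i • b k := by
  obtain ⟨b, χ, hb⟩ := exists_orthonormalBasis_mem_of_orthogonalFamily
    (orthogonalFamily_iInf_eigenspace_of_isStarNormal hT)
    (iSup_iInf_eigenspace_eq_top_of_isStarNormal hT hcomm)
  exact ⟨b, χ, fun k i ↦ mem_eigenspace_iff.mp ((Submodule.mem_iInf _).mp (hb k) i)⟩

end JointEigenbasis

section Characters

theorem exists_monoidHom_of_apply_eq_smul {A K V : Type*} [Monoid A] [CommRing K] [IsDomain K]
    [AddCommGroup V] [Module K V] [IsTorsionFree K V] {ρ : Representation K A V} {x : V}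
    (hx : x ≠ 0) {χ : A → K} (hχ : ∀ a, ρ a x = χ a • x) : ∃ ψ : A →* K, ⇑ψ = χ := by
  have hinj := smul_left_injective K hx
  have hone : χ 1 = 1 := hinj <| by simp only [← hχ, map_one, End.one_apply, one_smul]
  have hmul (a a' : A) : χ (a * a') = χ a * χ a' := hinj <| calc
    χ (a * a') • x = ρ a (ρ a' x) := by rw [← hχ, map_mul, End.mul_apply]
    _ = (χ a * χ a') • x := by rw [hχ a', map_smul, hχ a, smul_smul, mul_comm]
  exact ⟨⟨⟨χ, hone⟩, hmul⟩, rfl⟩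

theorem exists_equiv_of_sum_eq {m n A L : Type*} [Fintype m] [Fintype n] [MulOneClass A]
    [CommRing L] [IsDomain L] [CharZero L] {χ : m → A →* L} {ψ : n → A →* L}
    (h : ∀ a, ∑ i, χ i a = ∑ j, ψ j a) : ∃ σ : m ≃ n, ∀ i, ψ (σ i) = χ i := by
  classical
  have hsum : ∑ i, Finsupp.single (χ i) (1 : L) = ∑ j, Finsupp.single (ψ j) 1 :=
    linearIndependent_monoidHom A L <| funext fun a ↦ by simpa using h a
  have hcard (φ : A →* L) : Fintype.card {i // χ i = φ} = Fintype.card {j // ψ j = φ} := by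
    simpa [Finsupp.finsetSum_apply, Finsupp.single_apply, Fintype.card_subtype] using
      congr($hsum φ)
  let e (φ : A →* L) : {i // χ i = φ} ≃ {j // ψ j = φ} := Fintype.equivOfCardEq (hcard φ)
  exact ⟨.ofFiberEquiv e, Equiv.ofFiberEquiv_map e⟩

end Characters

section Representations

variable {A E F : Type*} [CommMonoid A] [NormedAddCommGroup E] [InnerProductSpace ℂ E]
  [FiniteDimensional ℂ E] [NormedAddCommGroup F] [InnerProductSpace ℂ F] [FiniteDimensional ℂ F]

theorem exists_orthonormalBasis_apply_eq_monoidHom_smul {ρ : A →* E →L[ℂ] E}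
    (hρ : ∀ a, IsStarNormal (ρ a)) :
    ∃ (b : OrthonormalBasis (Fin (finrank ℂ E)) ℂ E) (χ : Fin (finrank ℂ E) → A →* ℂ),
      ∀ k a, ρ a (b k) = χ k a • b k := by
  obtain ⟨b, χ, hb⟩ := exists_orthonormalBasis_apply_eq_smul_of_isStarNormal hρ
    fun a a' _ ↦ (Commute.all a a').map ρ
  let ρ' : Representation ℂ A E := ContinuousLinearMap.toLinearMapRingHom.toMonoidHom.comp ρ
  choose ψ hψ using fun k ↦
    exists_monoidHom_of_apply_eq_smul (ρ := ρ') (b.orthonormal.ne_zero k) (hb k)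
  exact ⟨b, ψ, fun k a ↦ by rw [hb, hψ]⟩

theorem trace_eq_sum_of_apply_eq_smul {𝕜 E ι : Type*} [RCLike 𝕜] [NormedAddCommGroup E]
    [InnerProductSpace 𝕜 E] [Fintype ι] (b : OrthonormalBasis ι 𝕜 E) {T : E →ₗ[𝕜] E} {c : ι → 𝕜}
    (h : ∀ i, T (b i) = c i • b i) : LinearMap.trace 𝕜 E T = ∑ i, c i := by
  simp [LinearMap.trace_eq_sum_inner T b, h, inner_smul_right]

theorem exists_linearIsometryEquiv_intertwining {ρ : A →* E →L[ℂ] E} {ρ' : A →* F →L[ℂ] F}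
    (hρ : ∀ a, IsStarNormal (ρ a)) (hρ' : ∀ a, IsStarNormal (ρ' a))
    (htrace : ∀ a, LinearMap.trace ℂ E (ρ a).toLinearMap =
      LinearMap.trace ℂ F (ρ' a).toLinearMap) :
    ∃ v : E ≃ₗᵢ[ℂ] F, ∀ a x, v (ρ a x) = ρ' a (v x) := by
  obtain ⟨b, χ, hb⟩ := exists_orthonormalBasis_apply_eq_monoidHom_smul hρ
  obtain ⟨b', χ', hb'⟩ := exists_orthonormalBasis_apply_eq_monoidHom_smul hρ'
  obtain ⟨σ, hσ⟩ : ∃ σ : _ ≃ _, ∀ k, χ' (σ k) = χ k := exists_equiv_of_sum_eq fun a ↦ by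
    rw [← trace_eq_sum_of_apply_eq_smul b (T := (ρ a).toLinearMap) (hb · a), htrace,
      trace_eq_sum_of_apply_eq_smul b' (hb' · a)]
  let v : E ≃ₗᵢ[ℂ] F := b.equiv b' σ
  have hv (a : A) : v.toLinearMap ∘ₗ (ρ a).toLinearMap = (ρ' a).toLinearMap ∘ₗ v.toLinearMap :=
    b.toBasis.ext fun k ↦ by simp [v, hb, hb', hσ]
  exact ⟨v, fun a ↦ LinearMap.congr_fun (hv a)⟩

end Representations

section Matrices

variable {n : Type*} [Fintype n] [DecidableEq n]

theorem trace_toEuclideanCLM {𝕜 : Type*} [RCLike 𝕜] (M : Matrix n n 𝕜) :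
    LinearMap.trace 𝕜 _ (Matrix.toEuclideanCLM (n := n) (𝕜 := 𝕜) M).toLinearMap = M.trace := by
  rw [Matrix.coe_toEuclideanCLM_eq_toEuclideanLin, Matrix.toEuclideanLin_eq_toLin_orthonormal,
    Matrix.trace_toLin_eq]

theorem unitary_rep_conj_iff_trace_eq_general {A : Type*} [CommMonoid A] (ρ ρ' : A →* Matrix n n ℂ)
    (hρ : ∀ a, IsStarNormal (ρ a)) (hρ' : ∀ a, IsStarNormal (ρ' a)) :
    (∃ v : Matrix.unitaryGroup n ℂ, ∀ a, v * ρ a * star (v : Matrix n n ℂ) = ρ' a) ↔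
      ∀ a, (ρ a).trace = (ρ' a).trace := by
  constructor
  · rintro ⟨v, hv⟩ a
    rw [← hv, Matrix.trace_mul_cycle, Unitary.coe_star_mul_self, one_mul]
  · intro htrace
    let Φ := Matrix.toEuclideanCLM (n := n) (𝕜 := ℂ)
    obtain ⟨w, hw⟩ := exists_linearIsometryEquiv_intertwining
      (ρ := (MonoidHomClass.toMonoidHom Φ).comp ρ) (ρ' := (MonoidHomClass.toMonoidHom Φ).comp ρ')
      (fun a ↦ have := hρ a; .map Φ (ρ a)) (fun a ↦ have := hρ' a; .map Φ (ρ' a))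
      (fun a ↦ by simpa [Φ, trace_toEuclideanCLM] using htrace a)
    let u := Unitary.linearIsometryEquiv.symm w
    let v : Matrix.unitaryGroup n ℂ := ⟨Φ.symm u, Unitary.map_mem Φ.symm u.2⟩
    have hv : Φ v = w := Φ.apply_symm_apply u
    refine ⟨v, fun a ↦ ?_⟩
    have hintertwine : v * ρ a = ρ' a * v := EquivLike.injective Φ <| by
      ext1 x
      simpa [hv] using hw a x
    rw [hintertwine, mul_assoc, Unitary.mul_star_self_of_mem v.2, mul_one]

end Matrices

/-- Two homomorphisms from a finite abelian group `A` to the unitary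
group are conjugate by a unitary matrix if and only if their characters (traces) agree
pointwise. -/
theorem unitary_rep_conj_iff_trace_eq
    {A : Type*} [CommGroup A] [Fintype A] (m : ℕ) (hm : 1 ≤ m)
    (ρ ρ' : A →* Matrix.unitaryGroup (Fin m) ℂ) :
    (∃ v : Matrix.unitaryGroup (Fin m) ℂ, ∀ a : A, v * ρ a * v⁻¹ = ρ' a) ↔
      ∀ a : A,
        Matrix.trace ((ρ a : Matrix (Fin m) (Fin m) ℂ)) =
          Matrix.trace ((ρ' a : Matrix (Fin m) (Fin m) ℂ)) := by
  simpa [Subtype.ext_iff] using unitary_rep_conj_iff_trace_eq_general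
    ((Submonoid.subtype _).comp ρ) ((Submonoid.subtype _).comp ρ')
    (fun a ↦ Unitary.coe_isStarNormal (ρ a)) fun a ↦ Unitary.coe_isStarNormal (ρ' a)
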